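/- arXiv:2209.01934 — 3 statements merged into one kernel-verified Lean document; each statement's English description precedes it below -/
import Mathlib

section
/- Generalised Christoffel–Darboux formula (Lemma 3.2). Let N ≥ 1 and n > N be integers and let L > 0 be a real number with 2L a positive integer. Then for all ζ, η ∈ ℂ, (1+ζ²)·∂_ζ κ̂_N(ζ,η) = 2ζ(n+L−1/2)·κ̂_N(ζ,η) + (Γ(2n+2L+2)/2) ∑_{k=0}^{2N−1} ζ^{k+2L} η^{k+2L}/(Γ(k+2L+1)Γ(2n−k)) − (π·Γ(2n+2L+2)/(2^{2n+2L} Γ(N+L+1/2) Γ(n−N))) · ζ^{2N+2L} ∑_{k=0}^{N−1} η^{2k+2L}/(Γ(n−k+1/2)Γ(k+L+1)) − (π·Γ(2n+2L+2)/(2^{2n+2L} Γ(n+1/2) Γ(L))) · ζ^{2L−1} ∑_{k=0}^{N−1} η^{2k+2L+1}/(Γ(n−k)Γ(k+L+3/2)), where ∂_ζ denotes the complex derivative in ζ. -/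
/-!
In terms of `f_s(z) = z^s / (Γ(s/2+1) Γ(ν-s/2))` with `ν = n+L+1/2`, both families of monomials in
`κ̂_N` are instances of the same one: up to a constant,
`κ̂_N(ζ,η) = ∑_{k<N} ∑_{l≤k} (f_{2L+2k+1}(ζ) f_{2L+2l}(η) - f_{2L+2k+1}(η) f_{2L+2l}(ζ))`.
The functional equation of `Γ` turns `(1+z²)∂_z - (2ν-2)z`, applied to `f_s`, into a difference
`2(u_s - u_{s+2})`, so the double sum telescopes. What survives is a boundary term at each end and
the diagonal `∑_j u_{2L+j+1}(ζ) f_{2L+j}(η)`, whose coefficients are given by Legendre duplication.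

Since `Γ⁻¹` takes the value `0` at the poles of `Γ` in Mathlib, it is the entire function `1/Γ`, and
these identities hold there as well.
-/

open MeasureTheory Filter Finset

noncomputable section

namespace SI

/-- The kernel `G_N(ζ,η)` built from the skew-orthogonal polynomials of the
symplectic induced spherical ensemble (all powers are principal-branch `cpow`s,
which agree with the integer powers whenever `2L` is a nonnegative integer). -/
def GK (N : ℕ) (n L : ℝ) (ζ η : ℂ) : ℂ :=
  ((Real.pi : ℂ) * Complex.Gamma ((2*n+2*L+2 : ℝ) : ℂ) / (2:ℂ) ^ ((2*n+2*L+1 : ℝ) : ℂ)) *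
  ∑ k ∈ range N, ∑ l ∈ range (k+1),
    ζ ^ ((2*k+2*L+1 : ℝ) : ℂ) * η ^ ((2*l+2*L : ℝ) : ℂ) /
      (Complex.Gamma ((k+L+3/2 : ℝ) : ℂ) * Complex.Gamma ((n-k : ℝ) : ℂ) *
       Complex.Gamma ((n-l+1/2 : ℝ) : ℂ) * Complex.Gamma ((l+L+1 : ℝ) : ℂ))

/-- The skew-symmetric kernel `κ̂_N(ζ,η) = G_N(ζ,η) - G_N(η,ζ)`. -/
def KK (N : ℕ) (n L : ℝ) (ζ η : ℂ) : ℂ := GK N n L ζ η - GK N n L η ζ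

section SkewPairing

variable {R : Type*} [CommRing R]

/-- The skew pairing of two sequences truncated at `N`: with `f` and `g` the values at two points of
a sequence of basis functions, it is the pre-kernel of a symplectic ensemble. -/
def skewPairing (N : ℕ) (f g : ℕ → R) : R :=
  ∑ k ∈ range N, ∑ l ∈ range (k + 1), (f (2 * k + 1) * g (2 * l) - g (2 * k + 1) * f (2 * l))

lemma skewPairing_add_left (N : ℕ) (f₁ f₂ g : ℕ → R) :
    skewPairing N (fun j => f₁ j + f₂ j) g = skewPairing N f₁ g + skewPairing N f₂ g := by
  simp only [skewPairing, ← sum_add_distrib]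
  exact sum_congr rfl fun k _ => sum_congr rfl fun l _ => by ring

lemma skewPairing_const_mul_left (N : ℕ) (c : R) (f g : ℕ → R) :
    skewPairing N (fun j => c * f j) g = c * skewPairing N f g := by
  simp only [skewPairing, mul_sum]
  exact sum_congr rfl fun k _ => sum_congr rfl fun l _ => by ring

lemma skewPairing_sub_shift_two (N : ℕ) (u g : ℕ → R) :
    skewPairing N (fun j => u j - u (j + 2)) g =
      ∑ j ∈ range (2 * N), u (j + 1) * g j
        - u (2 * N + 1) * ∑ k ∈ range N, g (2 * k) - u 0 * ∑ k ∈ range N, g (2 * k + 1) := by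
  induction N with
  | zero => simp [skewPairing]
  | succ N ih =>
    have telescope : ∑ l ∈ range (N + 1), (u (2 * l) - u (2 * l + 2)) = u 0 - u (2 * N + 2) :=
      sum_range_sub' (fun l => u (2 * l)) (N + 1)
    have new_terms : ∑ l ∈ range (N + 1), ((u (2 * N + 1) - u (2 * N + 1 + 2)) * g (2 * l)
          - g (2 * N + 1) * (u (2 * l) - u (2 * l + 2))) =
        (u (2 * N + 1) - u (2 * N + 3)) * ∑ l ∈ range (N + 1), g (2 * l)
          - g (2 * N + 1) * (u 0 - u (2 * N + 2)) := by
      rw [sum_sub_distrib, ← mul_sum, ← mul_sum, telescope]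
    rw [skewPairing] at ih ⊢
    rw [sum_range_succ, ih, new_terms, mul_add_one 2 N, sum_range_succ _ (2 * N + 1),
      sum_range_succ _ (2 * N), sum_range_succ (fun k => g (2 * k)),
      sum_range_succ (fun k => g (2 * k + 1))]
    ring

end SkewPairing

lemma hasDerivAt_skewPairing {𝕜 : Type*} [NontriviallyNormedField 𝕜] (N : ℕ) {F : ℕ → 𝕜 → 𝕜}
    {F' : ℕ → 𝕜} {z : 𝕜} (hF : ∀ j, HasDerivAt (F j) (F' j) z) (g : ℕ → 𝕜) :
    HasDerivAt (fun w => skewPairing N (fun j => F j w) g) (skewPairing N F' g) z :=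
  .fun_sum fun k _ => .fun_sum fun l _ =>
    ((hF (2 * k + 1)).mul_const (g (2 * l))).fun_sub ((hF (2 * l)).const_mul (g (2 * k + 1)))

lemma hasDerivAt_cpow_of_mem_slitPlane_or_natCast {s z : ℂ}
    (h : z ∈ Complex.slitPlane ∨ ∃ m : ℕ, s = m) :
    HasDerivAt (fun w : ℂ => w ^ s) (s * z ^ (s - 1)) z := by
  rcases h with hz | ⟨_ | m, rfl⟩
  · exact (Complex.hasStrictDerivAt_cpow_const hz).hasDerivAt
  · simpa using hasDerivAt_const z (1 : ℂ)
  · have hexp : ((m + 1 : ℕ) : ℂ) - 1 = m := by push_cast; ring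
    simpa only [hexp, Complex.cpow_natCast] using! hasDerivAt_pow (m + 1) z

lemma mul_cpow_eq_cpow_add_one {s z : ℂ} (h : z ≠ 0 ∨ s + 1 ≠ 0) : z * z ^ s = z ^ (s + 1) := by
  rcases eq_or_ne z 0 with rfl | hz
  · rw [zero_mul, Complex.zero_cpow (h.resolve_left (not_not.mpr rfl))]
  · rw [Complex.cpow_add _ _ hz, Complex.cpow_one, mul_comm]

/-- The function `f_s` of the header: the monomial `z^s`, normalised so that `(1+z²)∂_z - (2ν-2)z`
sends it to a difference of two `gammaFlux`. -/
def gammaMonomial (ν s z : ℂ) : ℂ :=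
  z ^ s / (Complex.Gamma (s / 2 + 1) * Complex.Gamma (ν - s / 2))

/-- The function `u_s` of the header, whose differences in steps of `2` arise from differentiating
`gammaMonomial`. -/
def gammaFlux (ν s z : ℂ) : ℂ :=
  z ^ (s - 1) / (Complex.Gamma (s / 2) * Complex.Gamma (ν - s / 2))

lemma two_mul_gammaFlux (ν s z : ℂ) :
    2 * gammaFlux ν s z =
      s * z ^ (s - 1) / (Complex.Gamma (s / 2 + 1) * Complex.Gamma (ν - s / 2)) := by
  simp only [gammaFlux, div_eq_mul_inv _ (_ * _), mul_inv]
  rw [Complex.one_div_Gamma_eq_self_mul_one_div_Gamma_add_one (s / 2)]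
  ring

lemma two_mul_gammaFlux_add_two (ν s z : ℂ) :
    2 * gammaFlux ν (s + 2) z =
      (2 * ν - 2 - s) * z ^ (s + 1) / (Complex.Gamma (s / 2 + 1) * Complex.Gamma (ν - s / 2)) := by
  have hΓ := Complex.one_div_Gamma_eq_self_mul_one_div_Gamma_add_one (ν - (s / 2 + 1))
  rw [show ν - (s / 2 + 1) + 1 = ν - s / 2 by ring] at hΓ
  rw [gammaFlux, show (s + 2) / 2 = s / 2 + 1 by ring, show s + 2 - 1 = s + 1 by ring]
  simp only [div_eq_mul_inv _ (_ * _), mul_inv, hΓ]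
  ring

lemma hasDerivAt_gammaMonomial (ν : ℂ) {s z : ℂ} (h : z ∈ Complex.slitPlane ∨ ∃ m : ℕ, s = m) :
    HasDerivAt (gammaMonomial ν s) (2 * gammaFlux ν s z) z := by
  rw [two_mul_gammaFlux]
  exact (hasDerivAt_cpow_of_mem_slitPlane_or_natCast h).div_const _

lemma one_add_sq_mul_gammaFlux (ν : ℂ) {s z : ℂ} (h : z ≠ 0 ∨ s + 1 ≠ 0) :
    (1 + z ^ 2) * (2 * gammaFlux ν s z) =
      (2 * ν - 2) * z * gammaMonomial ν s z
        + 2 * (gammaFlux ν s z - gammaFlux ν (s + 2) z) := by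
  have h_up : z * z ^ s = z ^ (s + 1) := mul_cpow_eq_cpow_add_one h
  have h_down : s * (z * z ^ (s - 1)) = s * z ^ s := by
    rcases eq_or_ne s 0 with rfl | hs
    · simp
    · rw [mul_cpow_eq_cpow_add_one (.inr (by rwa [sub_add_cancel])), sub_add_cancel]
  have h_two := two_mul_gammaFlux_add_two ν s z
  have h_zero := two_mul_gammaFlux ν s z
  simp only [div_eq_mul_inv _ (_ * _)] at h_two h_zero
  rw [gammaMonomial, div_eq_mul_inv]
  linear_combination z ^ 2 * h_zero + h_two
    + (Complex.Gamma (s / 2 + 1) * Complex.Gamma (ν - s / 2))⁻¹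
      * (z * h_down + (s - (2 * ν - 2)) * h_up)

lemma inv_Gamma_mul_Gamma_add_half (s : ℂ) :
    (Complex.Gamma s * Complex.Gamma (s + 1 / 2))⁻¹ =
      2 ^ (2 * s - 1) / (√Real.pi : ℂ) * (Complex.Gamma (2 * s))⁻¹ := by
  rw [Complex.Gamma_mul_Gamma_add_half, ← neg_sub (2 * s) 1, Complex.cpow_neg]
  simp only [mul_inv, inv_inv]
  ring

lemma gammaFlux_add_one_mul_gammaMonomial (ν s z w : ℂ) :
    gammaFlux ν (s + 1) z * gammaMonomial ν s w =
      2 ^ (2 * ν - 2) / Real.pi *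
        (z ^ s * w ^ s / (Complex.Gamma (s + 1) * Complex.Gamma (2 * ν - 1 - s))) := by
  have h_first := inv_Gamma_mul_Gamma_add_half ((s + 1) / 2)
  have h_second := inv_Gamma_mul_Gamma_add_half (ν - (s + 1) / 2)
  rw [show (s + 1) / 2 + 1 / 2 = s / 2 + 1 by ring, show 2 * ((s + 1) / 2) = s + 1 by ring,
    show s + 1 - 1 = s by ring] at h_first
  rw [show ν - (s + 1) / 2 + 1 / 2 = ν - s / 2 by ring,
    show 2 * (ν - (s + 1) / 2) = 2 * ν - 1 - s by ring] at h_second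
  have h_pow : (2 : ℂ) ^ s * 2 ^ (2 * ν - 1 - s - 1) = 2 ^ (2 * ν - 2) := by
    rw [← Complex.cpow_add _ _ two_ne_zero]
    ring_nf
  have h_pi : (√Real.pi : ℂ) * (√Real.pi : ℂ) = Real.pi := by
    exact_mod_cast Real.mul_self_sqrt Real.pi_pos.le
  calc gammaFlux ν (s + 1) z * gammaMonomial ν s w
      = z ^ s * w ^ s * (Complex.Gamma ((s + 1) / 2) * Complex.Gamma (s / 2 + 1))⁻¹
          * (Complex.Gamma (ν - (s + 1) / 2) * Complex.Gamma (ν - s / 2))⁻¹ := by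
        rw [gammaFlux, gammaMonomial, add_sub_cancel_right]
        simp only [div_eq_mul_inv _ (_ * _), mul_inv]
        ring
    _ = _ := by
        rw [h_first, h_second, ← h_pow, ← h_pi]
        simp only [div_eq_mul_inv, mul_inv]
        ring

/-- The constant in front of the double sum defining the kernel `GK`. -/
def kernelPrefactor (n L : ℝ) : ℂ :=
  Real.pi * Complex.Gamma ((2*n+2*L+2 : ℝ) : ℂ) / 2 ^ ((2*n+2*L+1 : ℝ) : ℂ)

lemma KK_eq_skewPairing (N : ℕ) (n L : ℝ) (ζ η : ℂ) :
    KK N n L ζ η =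
      kernelPrefactor n L *
        skewPairing N (fun j => gammaMonomial (n + L + 1 / 2) (2 * L + j) ζ)
          (fun j => gammaMonomial (n + L + 1 / 2) (2 * L + j) η) := by
  have term (k l : ℕ) (z w : ℂ) :
      z ^ ((2*k+2*L+1 : ℝ) : ℂ) * w ^ ((2*l+2*L : ℝ) : ℂ) /
        (Complex.Gamma ((k+L+3/2 : ℝ) : ℂ) * Complex.Gamma ((n-k : ℝ) : ℂ) *
          Complex.Gamma ((n-l+1/2 : ℝ) : ℂ) * Complex.Gamma ((l+L+1 : ℝ) : ℂ)) =
      gammaMonomial (n + L + 1 / 2) (2 * L + (2 * k + 1 : ℕ)) z *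
        gammaMonomial (n + L + 1 / 2) (2 * L + (2 * l : ℕ)) w := by
    rw [gammaMonomial, gammaMonomial, div_mul_div_comm]
    push_cast
    ring_nf
  simp only [KK, GK, kernelPrefactor, term, skewPairing, sum_sub_distrib, mul_sub]

lemma one_add_sq_mul_deriv_KK (N : ℕ) (n L : ℝ) {ζ : ℂ}
    (hζ : ζ ∈ Complex.slitPlane ∨ ∃ M : ℕ, 2 * L = M) (η : ℂ) :
    (1 + ζ ^ 2) * deriv (fun z => KK N n L z η) ζ =
      2 * ζ * ((n+L-1/2 : ℝ) : ℂ) * KK N n L ζ η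
      + 2 * kernelPrefactor n L *
        (∑ j ∈ range (2 * N), gammaFlux (n + L + 1 / 2) (2 * L + (j + 1 : ℕ)) ζ
            * gammaMonomial (n + L + 1 / 2) (2 * L + j) η
          - gammaFlux (n + L + 1 / 2) (2 * L + (2 * N + 1 : ℕ)) ζ
            * ∑ k ∈ range N, gammaMonomial (n + L + 1 / 2) (2 * L + (2 * k : ℕ)) η
          - gammaFlux (n + L + 1 / 2) (2 * L + (0 : ℕ)) ζ
            * ∑ k ∈ range N, gammaMonomial (n + L + 1 / 2) (2 * L + (2 * k + 1 : ℕ)) η) := by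
  set ν : ℂ := n + L + 1 / 2 with hν
  set g : ℕ → ℂ := fun j => gammaMonomial ν (2 * L + j) η
  set u : ℕ → ℂ := fun j => gammaFlux ν (2 * L + j) ζ
  have h_exponent (j : ℕ) : ζ ∈ Complex.slitPlane ∨ ∃ m : ℕ, (2 * L + j : ℂ) = m :=
    hζ.imp_right fun ⟨M, hM⟩ => ⟨M + j, by exact_mod_cast congrArg (· + (j : ℝ)) hM⟩
  have h_nonzero (j : ℕ) : ζ ≠ 0 ∨ (2 * L + j + 1 : ℂ) ≠ 0 :=
    (h_exponent j).imp Complex.slitPlane_ne_zero fun ⟨m, hm⟩ => hm ▸ Nat.cast_add_one_ne_zero m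
  have h_deriv := hasDerivAt_skewPairing N (fun j => hasDerivAt_gammaMonomial ν (h_exponent j)) g
  have h_recurrence (j : ℕ) : (1 + ζ ^ 2) * (2 * u j) =
      (2 * ν - 2) * ζ * gammaMonomial ν (2 * L + j) ζ + 2 * (u j - u (j + 2)) := by
    have h_shift : (2 * L + (j + 2 : ℕ) : ℂ) = 2 * L + j + 2 := by push_cast; ring
    simpa only [u, h_shift] using one_add_sq_mul_gammaFlux ν (h_nonzero j)
  have h_pairing := skewPairing_const_mul_left N (1 + ζ ^ 2) (fun j => 2 * u j) g
  simp only [h_recurrence] at h_pairing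
  rw [skewPairing_add_left, skewPairing_const_mul_left, skewPairing_const_mul_left,
    skewPairing_sub_shift_two] at h_pairing
  simp only [KK_eq_skewPairing, ← hν]
  rw [(h_deriv.const_mul _).deriv]
  have h_factor : 2 * ((n+L-1/2 : ℝ) : ℂ) = 2 * ν - 2 := by rw [hν]; push_cast; ring
  linear_combination
    -kernelPrefactor n L *
      (h_pairing + h_factor * ζ * skewPairing N (fun j => gammaMonomial ν (2 * L + j) ζ) g)

lemma two_mul_kernelPrefactor (n L : ℝ) :
    2 * kernelPrefactor n L =
      Real.pi * Complex.Gamma ((2*n+2*L+2 : ℝ) : ℂ) / 2 ^ ((2*n+2*L : ℝ) : ℂ) := by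
  rw [kernelPrefactor, Complex.ofReal_add (2*n+2*L) 1, Complex.ofReal_one,
    Complex.cpow_add _ _ two_ne_zero, Complex.cpow_one]
  ring

lemma two_mul_kernelPrefactor_mul_gammaFlux_mul_gammaMonomial (n L : ℝ) (j : ℕ) (ζ η : ℂ) :
    2 * kernelPrefactor n L *
        (gammaFlux (n + L + 1 / 2) (2 * L + (j + 1 : ℕ)) ζ
          * gammaMonomial (n + L + 1 / 2) (2 * L + j) η) =
      Complex.Gamma ((2*n+2*L+2 : ℝ) : ℂ) / 2 *
        (ζ ^ ((j+2*L : ℝ) : ℂ) * η ^ ((j+2*L : ℝ) : ℂ) /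
          (Complex.Gamma ((j+2*L+1 : ℝ) : ℂ) * Complex.Gamma ((2*n-j : ℝ) : ℂ))) := by
  have h_pow : (2 : ℂ) ^ (2 * (n + L + 1 / 2) - 2 : ℂ) = 2 ^ ((2*n+2*L : ℝ) : ℂ) / 2 := by
    rw [show (2 * (n + L + 1 / 2) - 2 : ℂ) = ((2*n+2*L : ℝ) : ℂ) - 1 by push_cast; ring,
      Complex.cpow_sub _ _ two_ne_zero, Complex.cpow_one]
  have h_pi : (Real.pi : ℂ) ≠ 0 := Complex.ofReal_ne_zero.mpr Real.pi_ne_zero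
  have h_index : (2 * L + (j + 1 : ℕ) : ℂ) = 2 * L + j + 1 := by push_cast; ring
  rw [h_index, gammaFlux_add_one_mul_gammaMonomial, two_mul_kernelPrefactor, h_pow,
    show (2 * L + j : ℂ) = ((j+2*L : ℝ) : ℂ) by push_cast; ring,
    show (((j+2*L : ℝ) : ℂ) + 1) = ((j+2*L+1 : ℝ) : ℂ) by push_cast; ring,
    show (2 * (n + L + 1 / 2) - 1 - ((j+2*L : ℝ) : ℂ)) = ((2*n-j : ℝ) : ℂ) by push_cast; ring]
  field_simp

lemma gammaMonomial_even (n L : ℝ) (k : ℕ) (η : ℂ) :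
    gammaMonomial (n + L + 1 / 2) (2 * L + (2 * k : ℕ)) η =
      η ^ ((2*k+2*L : ℝ) : ℂ) /
        (Complex.Gamma ((n-k+1/2 : ℝ) : ℂ) * Complex.Gamma ((k+L+1 : ℝ) : ℂ)) := by
  rw [gammaMonomial]
  push_cast
  ring_nf

lemma gammaMonomial_odd (n L : ℝ) (k : ℕ) (η : ℂ) :
    gammaMonomial (n + L + 1 / 2) (2 * L + (2 * k + 1 : ℕ)) η =
      η ^ ((2*k+2*L+1 : ℝ) : ℂ) /
        (Complex.Gamma ((n-k : ℝ) : ℂ) * Complex.Gamma ((k+L+3/2 : ℝ) : ℂ)) := by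
  rw [gammaMonomial]
  push_cast
  ring_nf

lemma gammaFlux_odd (n L : ℝ) (k : ℕ) (ζ : ℂ) :
    gammaFlux (n + L + 1 / 2) (2 * L + (2 * k + 1 : ℕ)) ζ =
      ζ ^ ((2*k+2*L : ℝ) : ℂ) /
        (Complex.Gamma ((k+L+1/2 : ℝ) : ℂ) * Complex.Gamma ((n-k : ℝ) : ℂ)) := by
  rw [gammaFlux]
  push_cast
  ring_nf

lemma gammaFlux_zero (n L : ℝ) (ζ : ℂ) :
    gammaFlux (n + L + 1 / 2) (2 * L + (0 : ℕ)) ζ =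
      ζ ^ ((2*L-1 : ℝ) : ℂ) /
        (Complex.Gamma ((n+1/2 : ℝ) : ℂ) * Complex.Gamma ((L : ℝ) : ℂ)) := by
  rw [gammaFlux]
  push_cast
  ring_nf

theorem generalised_christoffel_darboux_general (N : ℕ) (n L : ℝ) {ζ : ℂ}
    (hζ : ζ ∈ Complex.slitPlane ∨ ∃ M : ℕ, 2 * L = M) (η : ℂ) :
    (1+ζ^2) * deriv (fun ζ' => KK N n L ζ' η) ζ =
      2*ζ*((n+L-1/2 : ℝ) : ℂ) * KK N n L ζ η
      + Complex.Gamma ((2*n+2*L+2 : ℝ) : ℂ) / 2 *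
          ∑ k ∈ range (2*N), ζ ^ ((k+2*L : ℝ) : ℂ) * η ^ ((k+2*L : ℝ) : ℂ) /
            (Complex.Gamma ((k+2*L+1 : ℝ) : ℂ) * Complex.Gamma ((2*n-k : ℝ) : ℂ))
      - (Real.pi : ℂ) * Complex.Gamma ((2*n+2*L+2 : ℝ) : ℂ) /
          ((2:ℂ) ^ ((2*n+2*L : ℝ) : ℂ) * Complex.Gamma ((N+L+1/2 : ℝ) : ℂ) *
            Complex.Gamma ((n-N : ℝ) : ℂ)) *
          (ζ ^ ((2*N+2*L : ℝ) : ℂ) *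
            ∑ k ∈ range N, η ^ ((2*k+2*L : ℝ) : ℂ) /
              (Complex.Gamma ((n-k+1/2 : ℝ) : ℂ) * Complex.Gamma ((k+L+1 : ℝ) : ℂ)))
      - (Real.pi : ℂ) * Complex.Gamma ((2*n+2*L+2 : ℝ) : ℂ) /
          ((2:ℂ) ^ ((2*n+2*L : ℝ) : ℂ) * Complex.Gamma ((n+1/2 : ℝ) : ℂ) *
            Complex.Gamma ((L : ℝ) : ℂ)) *
          (ζ ^ ((2*L-1 : ℝ) : ℂ) *
            ∑ k ∈ range N, η ^ ((2*k+2*L+1 : ℝ) : ℂ) /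
              (Complex.Gamma ((n-k : ℝ) : ℂ) * Complex.Gamma ((k+L+3/2 : ℝ) : ℂ))) := by
  rw [one_add_sq_mul_deriv_KK N n L hζ η, mul_sub, mul_sub, mul_sum]
  simp only [two_mul_kernelPrefactor_mul_gammaFlux_mul_gammaMonomial, ← mul_sum]
  simp only [gammaMonomial_even, gammaMonomial_odd, gammaFlux_odd, gammaFlux_zero,
    two_mul_kernelPrefactor]
  ring

/-- Lemma 3.2: the generalised Christoffel–Darboux formula for `κ̂_N`. -/
theorem generalised_christoffel_darboux (N n M : ℕ) (L : ℝ) (hN : 1 ≤ N) (hn : N < n)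
    (hL : 0 < L) (hM : 2*L = (M : ℝ)) (hM1 : 1 ≤ M) (ζ η : ℂ) :
    (1+ζ^2) * deriv (fun ζ' => KK N n L ζ' η) ζ =
      2*ζ*(((n+L-1/2 : ℝ)) : ℂ) * KK N n L ζ η
      + Complex.Gamma ((2*(n:ℝ)+2*L+2 : ℝ) : ℂ) / 2 *
          ∑ k ∈ range (2*N), ζ ^ ((k+2*L : ℝ) : ℂ) * η ^ ((k+2*L : ℝ) : ℂ) /
            (Complex.Gamma ((k+2*L+1 : ℝ) : ℂ) * Complex.Gamma ((2*(n:ℝ)-k : ℝ) : ℂ))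
      - (Real.pi : ℂ) * Complex.Gamma ((2*(n:ℝ)+2*L+2 : ℝ) : ℂ) /
          ((2:ℂ) ^ ((2*(n:ℝ)+2*L : ℝ) : ℂ) * Complex.Gamma ((N+L+1/2 : ℝ) : ℂ) *
            Complex.Gamma (((n:ℝ)-N : ℝ) : ℂ)) *
          (ζ ^ ((2*(N:ℝ)+2*L : ℝ) : ℂ) *
            ∑ k ∈ range N, η ^ ((2*k+2*L : ℝ) : ℂ) /
              (Complex.Gamma (((n:ℝ)-k+1/2 : ℝ) : ℂ) * Complex.Gamma ((k+L+1 : ℝ) : ℂ)))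
      - (Real.pi : ℂ) * Complex.Gamma ((2*(n:ℝ)+2*L+2 : ℝ) : ℂ) /
          ((2:ℂ) ^ ((2*(n:ℝ)+2*L : ℝ) : ℂ) * Complex.Gamma (((n:ℝ)+1/2 : ℝ) : ℂ) *
            Complex.Gamma ((L : ℝ) : ℂ)) *
          (ζ ^ ((2*L-1 : ℝ) : ℂ) *
            ∑ k ∈ range N, η ^ ((2*k+2*L+1 : ℝ) : ℂ) /
              (Complex.Gamma (((n:ℝ)-k : ℝ) : ℂ) * Complex.Gamma ((k+L+3/2 : ℝ) : ℂ))) :=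
  generalised_christoffel_darboux_general N n L (.inr ⟨M, hM⟩) η

end SI
end
end

section
/- Solution of the limiting differential equation in the weak non-unitarity regime (Lemma 2.3(b)). Fix ρ > 0 and w ∈ ℂ. The function z ↦ K_w(z,w) := e^{−z²−w²} κ_w(z,w) satisfies K_w(w,w) = 0 and, for every z ∈ ℂ, its complex derivative in z equals F_w(z,w) := e^{−(z−w)²}( erfc(z+w−ρ/√2) − erfc(z+w+ρ/√2) ) − (1/√2)( e^{−(√2 z−ρ/2)²} + e^{−(√2 z+ρ/2)²} )·( erfc(√2 w−ρ/2) − erfc(√2 w+ρ/2) ). -/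
/-!
The functions `f_z(u)` depend only on `z - u`, so `∂_z f_z = -∂_u f_z`. Hence the `z`-derivative of
the Wronskian `W(f_w, f_z)` equals `2 f_w' f_z' - ∂_u (f_w f_z')`. The product of Gaussians
`f_w'(u) f_z'(u)` factors as a constant multiple of `e^{-(z-w)²} e^{-(z+w-2u)²}`, whose primitive
in `u` is an error function of `z + w - 2u`. The `z`-derivative of `∫ W` is therefore a pure
boundary term, and the boundary terms of `κ_w` complete the products of `f_w` and `f_z'` to
`-(f_z'(α) + f_z'(-α)) (f_w(α) - f_w(-α))`.
-/

open MeasureTheory Filter Finset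

noncomputable section

namespace SI

/-- The entire extension of the error function: `erf(z) = (2/√π)∫₀¹ z e^{-s²z²} ds`. -/
def cerf (z : ℂ) : ℂ :=
  (2 / (Real.sqrt Real.pi : ℂ)) * ∫ s in (0:ℝ)..1, z * Complex.exp (-((s:ℂ)^2 * z^2))

/-- `erfc(z) = 1 - erf(z)`. -/
def cerfc (z : ℂ) : ℂ := 1 - cerf z

/-- `f_z(u) = (1/2) erfc(√2 (z-u))`. -/
def fz (z : ℂ) (u : ℝ) : ℂ := (1/2) * cerfc ((Real.sqrt 2 : ℂ) * (z - (u:ℂ)))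

/-- The Wronskian `W(f_w, f_z)(u) = f_w(u) f_z'(u) - f_z(u) f_w'(u)` (derivative in `u`). -/
def Wr (w z : ℂ) (u : ℝ) : ℂ := fz w u * deriv (fz z) u - fz z u * deriv (fz w) u

/-- The interpolating kernel `κ_w` of the weak non-unitarity regime,
with `α = ρ/(2√2)`. -/
def kweak (ρ : ℝ) (z w : ℂ) : ℂ :=
  (Real.sqrt Real.pi : ℂ) * Complex.exp (z^2+w^2) *
    ((∫ u in (-(ρ/(2*Real.sqrt 2)))..(ρ/(2*Real.sqrt 2)), Wr w z u)
      + fz w (ρ/(2*Real.sqrt 2)) * fz z (-(ρ/(2*Real.sqrt 2)))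
      - fz z (ρ/(2*Real.sqrt 2)) * fz w (-(ρ/(2*Real.sqrt 2))))

/-- The inhomogeneous term `F_w` of the weak non-unitarity regime. -/
def Fweak (ρ : ℝ) (z w : ℂ) : ℂ :=
  Complex.exp (-(z-w)^2) *
      (cerfc (z+w-((ρ/Real.sqrt 2 : ℝ) : ℂ)) - cerfc (z+w+((ρ/Real.sqrt 2 : ℝ) : ℂ)))
    - (1/(Real.sqrt 2 : ℂ)) *
      (Complex.exp (-((Real.sqrt 2 : ℂ)*z - ((ρ/2 : ℝ):ℂ))^2)
        + Complex.exp (-((Real.sqrt 2 : ℂ)*z + ((ρ/2 : ℝ):ℂ))^2)) *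
      (cerfc ((Real.sqrt 2 : ℂ)*w - ((ρ/2 : ℝ):ℂ)) - cerfc ((Real.sqrt 2 : ℂ)*w + ((ρ/2 : ℝ):ℂ)))

theorem hasDerivAt_integral_segment {E : Type*} [NormedAddCommGroup E] [NormedSpace ℂ E]
    [CompleteSpace E] {f : ℂ → E} (hf : Differentiable ℂ f) (z : ℂ) :
    HasDerivAt (fun z : ℂ => ∫ s in (0:ℝ)..1, z • f (s * z)) (f z) z := by
  obtain ⟨g, hg⟩ := hf.isExactOn_univ
  have integral_eq (z : ℂ) : ∫ s in (0:ℝ)..1, z • f (s * z) = g z - g 0 := by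
    have radial (s : ℝ) : HasDerivAt (fun s : ℝ => g (s * z)) (z • f (s * z)) s := by
      exact (hg (s * z) trivial).scomp s (hasDerivAt_mul_const z).comp_ofReal
    have hcont : Continuous fun s : ℝ => z • f (s * z) := by
      have := hf.continuous
      fun_prop
    simpa using intervalIntegral.integral_eq_sub_of_hasDerivAt (fun s _ => radial s)
      (hcont.intervalIntegrable 0 1)
  simpa only [integral_eq] using (hg z trivial).sub_const (g 0)

theorem hasDerivAt_intervalIntegral_of_continuous_deriv {𝕜 E : Type*} [RCLike 𝕜]
    [NormedAddCommGroup E] [NormedSpace ℝ E] [NormedSpace 𝕜 E] {μ : Measure ℝ}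
    [IsLocallyFiniteMeasure μ] {F F' : 𝕜 → ℝ → E} (hF : ∀ z, Continuous (F z))
    (hF' : Continuous (Function.uncurry F')) (hderiv : ∀ z u, HasDerivAt (F · u) (F' z u) z)
    (a b : ℝ) (z : 𝕜) :
    HasDerivAt (fun z => ∫ u in a..b, F z u ∂μ) (∫ u in a..b, F' z u ∂μ) z := by
  obtain ⟨C, hC⟩ := ((isCompact_closedBall z 1).prod
    (isCompact_uIcc (a := a) (b := b))).exists_bound_of_continuousOn hF'.continuousOn
  refine (intervalIntegral.hasDerivAt_integral_of_dominated_loc_of_deriv_le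
    (bound := fun _ => C) (Metric.ball_mem_nhds z one_pos)
    (.of_forall fun z => (hF z).aestronglyMeasurable) ((hF z).intervalIntegrable a b)
    (hF'.uncurry_left z).aestronglyMeasurable
    (.of_forall fun u hu z hz => ?_) intervalIntegrable_const
    (.of_forall fun u _ z _ => hderiv z u)).2
  exact hC (z, u) ⟨Metric.ball_subset_closedBall hz, Set.uIoc_subset_uIcc hu⟩

theorem hasDerivAt_cerf (z : ℂ) :
    HasDerivAt cerf (2 / (Real.sqrt Real.pi : ℂ) * Complex.exp (-z ^ 2)) z := by
  have := hasDerivAt_integral_segment (f := fun z => Complex.exp (-z ^ 2)) (by fun_prop) z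
  simp only [mul_pow, smul_eq_mul] at this
  exact this.const_mul _

theorem hasDerivAt_cerfc (z : ℂ) :
    HasDerivAt cerfc (-(2 / (Real.sqrt Real.pi : ℂ) * Complex.exp (-z ^ 2))) z :=
  (hasDerivAt_cerf z).const_sub 1

theorem sq_sqrt_two : (Real.sqrt 2 : ℂ) ^ 2 = 2 := by
  norm_cast
  simp

theorem sqrt_pi_ne_zero : (Real.sqrt Real.pi : ℂ) ≠ 0 := by
  exact_mod_cast (Real.sqrt_pos.2 Real.pi_pos).ne'

/-- The entire extension of the centred Gaussian density of variance `1/4`. The function `fz z` is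
the distribution function of its translate with mean `z`. -/
def gaussDensity (z : ℂ) : ℂ :=
  (Real.sqrt 2 : ℂ) / (Real.sqrt Real.pi : ℂ) * Complex.exp (-(2 * z ^ 2))

@[fun_prop]
theorem continuous_gaussDensity : Continuous gaussDensity := by
  unfold gaussDensity
  fun_prop

theorem hasDerivAt_gaussDensity (z : ℂ) :
    HasDerivAt gaussDensity (-(4 * z * gaussDensity z)) z := by
  have := ((hasDerivAt_pow 2 z).const_mul 2).fun_neg.cexp.const_mul
    ((Real.sqrt 2 : ℂ) / (Real.sqrt Real.pi : ℂ))
  refine this.congr_deriv ?_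
  unfold gaussDensity
  push_cast
  ring

theorem gaussDensity_mul_gaussDensity (z w : ℂ) :
    gaussDensity z * gaussDensity w =
      2 / (Real.sqrt Real.pi : ℂ) ^ 2 *
        (Complex.exp (-(z - w) ^ 2) * Complex.exp (-(z + w) ^ 2)) := by
  have hexp : Complex.exp (-(z - w) ^ 2) * Complex.exp (-(z + w) ^ 2) =
      Complex.exp (-(2 * z ^ 2)) * Complex.exp (-(2 * w ^ 2)) := by
    rw [← Complex.exp_add, ← Complex.exp_add]
    ring_nf
  unfold gaussDensity
  rw [hexp]
  linear_combination Complex.exp (-(2 * z ^ 2)) * Complex.exp (-(2 * w ^ 2)) /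
    (Real.sqrt Real.pi : ℂ) ^ 2 * sq_sqrt_two

theorem hasDerivAt_half_cerfc_sqrt_two_mul (z : ℂ) :
    HasDerivAt (fun z => (1 / 2) * cerfc ((Real.sqrt 2 : ℂ) * z)) (-gaussDensity z) z := by
  have := ((hasDerivAt_cerfc _).comp z (hasDerivAt_const_mul (Real.sqrt 2 : ℂ))).const_mul
    (1 / 2 : ℂ)
  refine this.congr_deriv ?_
  rw [mul_pow, sq_sqrt_two]
  unfold gaussDensity
  ring

theorem hasDerivAt_fz_left (z : ℂ) (u : ℝ) : HasDerivAt (fz · u) (-gaussDensity (z - u)) z :=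
  (hasDerivAt_half_cerfc_sqrt_two_mul _).comp_sub_const z (u : ℂ)

theorem hasDerivAt_fz (z : ℂ) (u : ℝ) : HasDerivAt (fz z) (gaussDensity (z - u)) u :=
  ((hasDerivAt_half_cerfc_sqrt_two_mul _).comp_const_sub z (u : ℂ)).comp_ofReal.congr_deriv
    (neg_neg _)

@[fun_prop]
theorem continuous_fz (z : ℂ) : Continuous (fz z) :=
  continuous_iff_continuousAt.2 fun u => (hasDerivAt_fz z u).continuousAt

theorem Wr_eq (w z : ℂ) (u : ℝ) :
    Wr w z u = fz w u * gaussDensity (z - u) - fz z u * gaussDensity (w - u) := by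
  rw [Wr, (hasDerivAt_fz z u).deriv, (hasDerivAt_fz w u).deriv]

theorem Wr_self (w : ℂ) (u : ℝ) : Wr w w u = 0 :=
  sub_self _

theorem continuous_Wr (w z : ℂ) : Continuous (Wr w z) := by
  simp only [funext (Wr_eq w z)]
  fun_prop

/-- The `z`-derivative of the Wronskian `W(f_w, f_z)(u)`. -/
def WrDeriv (w z : ℂ) (u : ℝ) : ℂ :=
  gaussDensity (z - u) * gaussDensity (w - u) - fz w u * (4 * (z - u) * gaussDensity (z - u))

theorem continuous_uncurry_WrDeriv (w : ℂ) : Continuous (Function.uncurry (WrDeriv w)) := by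
  unfold WrDeriv Function.uncurry
  fun_prop

theorem hasDerivAt_Wr (w z : ℂ) (u : ℝ) : HasDerivAt (Wr w · u) (WrDeriv w z u) z := by
  simp only [Wr_eq]
  have := (((hasDerivAt_gaussDensity _).comp_sub_const z (u : ℂ)).const_mul (fz w u)).sub
    ((hasDerivAt_fz_left z u).mul_const (gaussDensity (w - u)))
  refine this.congr_deriv ?_
  unfold WrDeriv
  ring

/-- A primitive in `u` of the `z`-derivative of the Wronskian `W(f_w, f_z)(u)`. -/
def WrDerivPrimitive (w z : ℂ) (u : ℝ) : ℂ :=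
  1 / (Real.sqrt Real.pi : ℂ) * Complex.exp (-(z - w) ^ 2) * cerfc (z + w - 2 * u) -
    fz w u * gaussDensity (z - u)

theorem hasDerivAt_WrDerivPrimitive (w z : ℂ) (u : ℝ) :
    HasDerivAt (WrDerivPrimitive w z) (WrDeriv w z u) u := by
  have hcerfc : HasDerivAt (fun u : ℝ => cerfc (z + w - 2 * u))
      (4 / (Real.sqrt Real.pi : ℂ) * Complex.exp (-(z + w - 2 * u) ^ 2)) u := by
    refine ((hasDerivAt_cerfc _).comp (u : ℂ)
      ((hasDerivAt_const_mul 2).const_sub (z + w))).comp_ofReal.congr_deriv ?_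
    ring
  have hgauss : HasDerivAt (fun u : ℝ => gaussDensity (z - u))
      (4 * (z - u) * gaussDensity (z - u)) u := by
    simpa using ((hasDerivAt_gaussDensity _).comp_const_sub z (u : ℂ)).comp_ofReal
  have hprod : gaussDensity (z - u) * gaussDensity (w - u) =
      2 / (Real.sqrt Real.pi : ℂ) ^ 2 *
        (Complex.exp (-(z - w) ^ 2) * Complex.exp (-(z + w - 2 * u) ^ 2)) := by
    rw [gaussDensity_mul_gaussDensity]
    ring_nf
  refine ((hcerfc.const_mul _).sub ((hasDerivAt_fz w u).mul hgauss)).congr_deriv ?_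
  unfold WrDeriv
  linear_combination -2 * hprod

theorem hasDerivAt_integral_Wr (w z : ℂ) (a b : ℝ) :
    HasDerivAt (fun z => ∫ u in a..b, Wr w z u)
      (WrDerivPrimitive w z b - WrDerivPrimitive w z a) z := by
  rw [← intervalIntegral.integral_eq_sub_of_hasDerivAt
    (fun u _ => hasDerivAt_WrDerivPrimitive w z u)
    (((continuous_uncurry_WrDeriv w).uncurry_left z).intervalIntegrable a b)]
  exact hasDerivAt_intervalIntegral_of_continuous_deriv (continuous_Wr w)
    (continuous_uncurry_WrDeriv w) (hasDerivAt_Wr w) a b z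

/-- The Wronskian integral with boundary terms, over an arbitrary interval `[a, b]`. The kernel
`κ_w` is `√π e^{z²+w²}` times its value for `[a, b] = [-α, α]`. -/
def wronskianKernel (a b : ℝ) (w z : ℂ) : ℂ :=
  (∫ u in a..b, Wr w z u) + fz w b * fz z a - fz z b * fz w a

theorem wronskianKernel_self (a b : ℝ) (w : ℂ) : wronskianKernel a b w w = 0 := by
  simp [wronskianKernel, Wr_self]

theorem hasDerivAt_wronskianKernel (a b : ℝ) (w z : ℂ) :
    HasDerivAt (wronskianKernel a b w)
      (1 / (Real.sqrt Real.pi : ℂ) * Complex.exp (-(z - w) ^ 2) *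
          (cerfc (z + w - 2 * b) - cerfc (z + w - 2 * a)) -
        (gaussDensity (z - b) + gaussDensity (z - a)) * (fz w b - fz w a)) z := by
  have := ((hasDerivAt_integral_Wr w z a b).add ((hasDerivAt_fz_left z a).const_mul (fz w b))).sub
    ((hasDerivAt_fz_left z b).mul_const (fz w a))
  refine this.congr_deriv ?_
  unfold WrDerivPrimitive
  ring

theorem exp_mul_kweak (ρ : ℝ) (z w : ℂ) :
    Complex.exp (-z ^ 2 - w ^ 2) * kweak ρ z w =
      (Real.sqrt Real.pi : ℂ) *
        wronskianKernel (-(ρ / (2 * Real.sqrt 2))) (ρ / (2 * Real.sqrt 2)) w z := by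
  have hexp : Complex.exp (-z ^ 2 - w ^ 2) * Complex.exp (z ^ 2 + w ^ 2) = 1 := by
    rw [← Complex.exp_add, ← Complex.exp_zero]
    ring_nf
  unfold kweak wronskianKernel
  rw [← mul_assoc, mul_left_comm, hexp, mul_one]

theorem Fweak_two_mul_sqrt_two_mul (α : ℝ) (z w : ℂ) :
    Fweak (2 * Real.sqrt 2 * α) z w = (Real.sqrt Real.pi : ℂ) *
      (1 / (Real.sqrt Real.pi : ℂ) * Complex.exp (-(z - w) ^ 2) *
          (cerfc (z + w - 2 * α) - cerfc (z + w + 2 * α)) -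
        (gaussDensity (z - α) + gaussDensity (z + α)) * (fz w α - fz w (-α))) := by
  have hdiv_two : 2 * Real.sqrt 2 * α / 2 = Real.sqrt 2 * α := by ring
  have hdiv_sqrt : 2 * Real.sqrt 2 * α / Real.sqrt 2 = 2 * α := by field_simp
  have hgauss (ζ : ℂ) : (Real.sqrt Real.pi : ℂ) * gaussDensity ζ =
      Real.sqrt 2 * Complex.exp (-((Real.sqrt 2 : ℂ) * ζ) ^ 2) := by
    have := sqrt_pi_ne_zero
    rw [gaussDensity, mul_pow, sq_sqrt_two]
    field_simp
  have hinv : 1 / (Real.sqrt 2 : ℂ) = Real.sqrt 2 / 2 := by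
    exact_mod_cast (Real.sqrt_div_self' (x := 2)).symm
  have hpi : (Real.sqrt Real.pi : ℂ) * (1 / (Real.sqrt Real.pi : ℂ)) = 1 :=
    mul_one_div_cancel sqrt_pi_ne_zero
  unfold Fweak fz
  rw [hdiv_two, hdiv_sqrt, hinv]
  push_cast
  simp only [sub_neg_eq_add, ← mul_sub, ← mul_add]
  linear_combination (-Complex.exp (-(z - w) ^ 2) *
      (cerfc (z + w - 2 * α) - cerfc (z + w + 2 * α))) * hpi +
    (1 / 2 * (cerfc (Real.sqrt 2 * (w - α)) - cerfc (Real.sqrt 2 * (w + α)))) *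
      (hgauss (z - α) + hgauss (z + α))

/-- Lemma 2.3(b): the interpolating kernel solves the limiting
differential equation of the weak non-unitarity regime. -/
theorem limiting_ODE_weak (ρ : ℝ) (hρ : 0 < ρ) (w : ℂ) :
    Complex.exp (-w^2-w^2) * kweak ρ w w = 0 ∧
    ∀ z : ℂ, HasDerivAt (fun z => Complex.exp (-z^2-w^2) * kweak ρ z w) (Fweak ρ z w) z := by
  set α := ρ / (2 * Real.sqrt 2) with hα
  have hρα : ρ = 2 * Real.sqrt 2 * α := by
    rw [hα]
    field_simp
  simp only [exp_mul_kweak, ← hα]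
  refine ⟨by rw [wronskianKernel_self, mul_zero], fun z => ?_⟩
  refine ((hasDerivAt_wronskianKernel (-α) α w z).const_mul _).congr_deriv ?_
  rw [hρα, Fweak_two_mul_sqrt_two_mul]
  simp only [Complex.ofReal_neg, mul_neg, sub_neg_eq_add]

end SI
end
end

section
/- Solution of the limiting differential equation at the singular origin (Lemma 2.3(c)). Let L > 0 be a real number with 2L a positive integer and fix w ∈ ℂ. The function z ↦ K_o(z,w) := e^{−z²−w²} κ_o(z,w) satisfies K_o(w,w) = 0 and, for every z ∈ ℂ, its complex derivative in z equals F_o(z,w) := 2 e^{−(z−w)²} P(2L,2zw) − (2√π/Γ(L)) z^{2L−1} e^{−z²} P(L+1/2,w²). -/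
open MeasureTheory Filter Finset

noncomputable section

namespace SI

/-- The two-parametric Mittag-Leffler function `E_{2,1+M}` with `M = 2L ∈ ℕ`. -/
def MLE (M : ℕ) (x : ℂ) : ℂ := ∑' k : ℕ, x ^ k / Complex.Gamma ((2*k+1+M : ℕ) : ℂ)

/-- The limiting kernel `κ_o` at the singular origin, with `M = 2L`. -/
def ko (M : ℕ) (z w : ℂ) : ℂ :=
  2 * (2*z*w) ^ M * ∫ s in (0:ℝ)..1, (s:ℂ) ^ M *
    (z * Complex.exp ((1-(s:ℂ)^2)*z^2) - w * Complex.exp ((1-(s:ℂ)^2)*w^2)) *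
    MLE M ((2*(s:ℂ)*z*w)^2)

/-- The regularised incomplete gamma function
`P(2L, x) = (x^{2L}/Γ(2L)) ∫₀¹ s^{2L-1} e^{-xs} ds` with `M = 2L ∈ ℕ`. -/
def P2L (M : ℕ) (x : ℂ) : ℂ :=
  (x ^ M / Complex.Gamma ((M : ℝ) : ℂ)) *
    ∫ s in (0:ℝ)..1, (s:ℂ) ^ (M-1) * Complex.exp (-x*(s:ℂ))

/-- `P(L+1/2, w²) = (w^{2L+1}/Γ(L+1/2)) ∫₀¹ s^{L-1/2} e^{-w²s} ds` with `M = 2L`. -/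
def PLhalf (M : ℕ) (L : ℝ) (w : ℂ) : ℂ :=
  (w ^ (M+1) / Complex.Gamma ((L+1/2 : ℝ) : ℂ)) *
    ∫ s in (0:ℝ)..1, ((s ^ (L-1/2) : ℝ) : ℂ) * Complex.exp (-w^2*(s:ℂ))

/-- The limiting inhomogeneous term `F_o` at the singular origin, with `M = 2L`. -/
def Fo (M : ℕ) (L : ℝ) (z w : ℂ) : ℂ :=
  2 * Complex.exp (-(z-w)^2) * P2L M (2*z*w)
    - (2 * (Real.sqrt Real.pi : ℂ) / Complex.Gamma ((L : ℝ) : ℂ)) * z ^ (M-1) *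
        Complex.exp (-z^2) * PLhalf M L w

/-!
Put `S_M(t) = t^M E_{2,1+M}(t²) = ∑ₖ t^(2k+M)/(2k+M)!`, so that `S_{M+1}' = S_M` and
`S_{M+2}(t) = S_M(t) - t^M/M!`. In terms of `S_M` the weighted kernel `e^{-z²-w²} κ_o(z,w)` is the
integral over `s ∈ [0,1]` of a function whose `z`-derivative is an exact `s`-derivative up to a
Gaussian moment, produced by the defect `t^M/M!` of the recursion. The boundary term at `s = 1` is
the `P(2L,2zw)` summand of `F_o`, since `P(M,t) = e^{-t}(S_M(t) + S_{M+1}(t))`. The moment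
integrates, after `s ↦ s²`, to the `P(L+1/2,w²)` summand, and the constants agree by Legendre's
duplication formula.
-/

section IntervalIntegral

variable {E : Type*} [NormedAddCommGroup E] [NormedSpace ℝ E]

lemma hasDerivAt_intervalIntegral_of_continuous {𝕜 : Type*} [RCLike 𝕜] [NormedSpace 𝕜 E]
    {μ : Measure ℝ} [IsLocallyFiniteMeasure μ] {F F' : 𝕜 → ℝ → E} (hF : ∀ z, Continuous (F z))
    (hF' : Continuous (Function.uncurry F'))
    (hderiv : ∀ z s, HasDerivAt (fun z => F z s) (F' z s) z) (a b : ℝ) (z : 𝕜) :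
    HasDerivAt (fun z => ∫ s in a..b, F z s ∂μ) (∫ s in a..b, F' z s ∂μ) z := by
  obtain ⟨C, hC⟩ := ((isCompact_closedBall z 1).prod
    (isCompact_uIcc (a := a) (b := b))).exists_bound_of_continuousOn hF'.continuousOn
  have hF'z : Continuous (F' z) := hF'.comp (Continuous.prodMk_right z)
  exact (intervalIntegral.hasDerivAt_integral_of_dominated_loc_of_deriv_le
    (bound := fun _ => C) (Metric.closedBall_mem_nhds z one_pos)
    (.of_forall fun x => (hF x).aestronglyMeasurable) ((hF z).intervalIntegrable a b)
    hF'z.aestronglyMeasurable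
    (.of_forall fun s hs x hx => hC (x, s) ⟨hx, Set.uIoc_subset_uIcc hs⟩)
    intervalIntegrable_const (.of_forall fun s _ x _ => hderiv x s)).2

lemma integral_rpow_sub_half_smul {L : ℝ} {M : ℕ} (hM : 2 * L = M) (f : ℝ → E) {b : ℝ}
    (hb : 0 ≤ b) :
    ∫ s in 0..b ^ 2, s ^ (L - 1 / 2) • f s = ∫ s in 0..b, (2 * s ^ M) • f (s ^ 2) := by
  have hsubst := intervalIntegral.integral_deriv_smul_comp_of_deriv_nonneg (a := 0) (b := b)
    (f := fun s : ℝ => s ^ 2) (f' := fun s => 2 * s) (g := fun s => s ^ (L - 1 / 2) • f s)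
    (continuous_pow 2).continuousOn (fun s _ => by simpa using hasDerivAt_pow 2 s)
    (fun s hs => by rw [min_eq_left hb] at hs; linarith [hs.1])
  rw [zero_pow two_ne_zero] at hsubst
  rw [← hsubst]
  refine intervalIntegral.integral_congr_Ioo_of_le hb fun s hs => ?_
  have hpow : s * (s ^ 2) ^ (L - 1 / 2) = s ^ M := by
    calc s * (s ^ 2) ^ (L - 1 / 2) = s ^ (1 + 2 * (L - 1 / 2)) := by
          rw [Real.rpow_add hs.1, Real.rpow_one, Real.rpow_mul hs.1.le, Real.rpow_two]
      _ = s ^ M := by rw [← Real.rpow_natCast, ← hM]; ring_nf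
  simp only [Function.comp_apply, smul_smul, mul_assoc, hpow]

end IntervalIntegral

section MittagLeffler

/-- The function `t ↦ t^M E_{2,1+M}(t²) = ∑ₖ t^(2k+M)/(2k+M)!`, which absorbs the powers
multiplying the Mittag-Leffler factor of `ko`. -/
def scaledMLE (M : ℕ) (t : ℂ) : ℂ := t ^ M * MLE M (t ^ 2)

lemma hasSum_scaledMLE (M : ℕ) (t : ℂ) :
    HasSum (fun k : ℕ => t ^ (2 * k + M) / ((2 * k + M).factorial : ℂ)) (scaledMLE M t) := by
  have hsummable : Summable fun k : ℕ => t ^ (2 * k + M) / ((2 * k + M).factorial : ℂ) :=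
    (NormedSpace.expSeries_div_summable t).comp_injective
      (i := fun k : ℕ => 2 * k + M) fun j k hjk => by simpa using hjk
  convert hsummable.hasSum using 1
  rw [scaledMLE, MLE, ← tsum_mul_left]
  refine tsum_congr fun k => ?_
  rw [show ((2 * k + 1 + M : ℕ) : ℂ) = ((2 * k + M : ℕ) : ℂ) + 1 by push_cast; ring,
    Complex.Gamma_nat_eq_factorial]
  ring

lemma scaledMLE_zero : scaledMLE 0 = Complex.cosh :=
  funext fun t => (hasSum_scaledMLE 0 t).unique (Complex.hasSum_cosh t)

lemma scaledMLE_one : scaledMLE 1 = Complex.sinh :=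
  funext fun t => (hasSum_scaledMLE 1 t).unique (Complex.hasSum_sinh t)

lemma scaledMLE_add_two (M : ℕ) :
    scaledMLE (M + 2) = fun t => scaledMLE M t - t ^ M / (M.factorial : ℂ) := by
  funext t
  refine (hasSum_scaledMLE (M + 2) t).unique ?_
  have h := (hasSum_nat_add_iff' 1).2 (hasSum_scaledMLE M t)
  simpa [show ∀ k : ℕ, 2 * (k + 1) + M = 2 * k + (M + 2) from fun k => by ring] using h

lemma scaledMLE_succ_apply_zero (M : ℕ) : scaledMLE (M + 1) 0 = 0 := by
  simp [scaledMLE]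

lemma hasDerivAt_scaledMLE_succ (t : ℂ) :
    ∀ M : ℕ, HasDerivAt (scaledMLE (M + 1)) (scaledMLE M t) t
  | 0 => by
    rw [scaledMLE_one, scaledMLE_zero]
    exact Complex.hasDerivAt_sinh t
  | 1 => by
    rw [scaledMLE_add_two 0, scaledMLE_zero, scaledMLE_one]
    simpa using (Complex.hasDerivAt_cosh t).sub_const 1
  | M + 2 => by
    rw [scaledMLE_add_two (M + 1), scaledMLE_add_two M]
    refine ((hasDerivAt_scaledMLE_succ t M).sub
      ((hasDerivAt_pow (M + 1) t).div_const _)).congr_deriv ?_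
    rw [Nat.factorial_succ, Nat.cast_mul, Nat.add_sub_cancel,
      mul_div_mul_left _ _ (Nat.cast_ne_zero.2 M.succ_ne_zero)]

@[fun_prop]
lemma continuous_scaledMLE : ∀ M : ℕ, Continuous (scaledMLE M)
  | 0 => scaledMLE_zero ▸ Complex.continuous_cosh
  | M + 1 => continuous_iff_continuousAt.2 fun t => (hasDerivAt_scaledMLE_succ t M).continuousAt

end MittagLeffler

section IncompleteGamma

lemma hasDerivAt_exp_neg_mul_scaledMLE_add (n : ℕ) (t : ℂ) :
    HasDerivAt (fun t => Complex.exp (-t) * (scaledMLE (n + 1) t + scaledMLE (n + 2) t))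
      (t ^ n / (n.factorial : ℂ) * Complex.exp (-t)) t := by
  refine ((hasDerivAt_neg t).cexp.mul ((hasDerivAt_scaledMLE_succ t n).add
    (hasDerivAt_scaledMLE_succ t (n + 1)))).congr_deriv ?_
  simp only [scaledMLE_add_two, Pi.add_apply]
  ring

lemma P2L_succ (n : ℕ) (t : ℂ) :
    P2L (n + 1) t = Complex.exp (-t) * (scaledMLE (n + 1) t + scaledMLE (n + 2) t) := by
  have hderiv (s : ℝ) : HasDerivAt
      (fun s : ℝ => Complex.exp (-(t * s)) *
        (scaledMLE (n + 1) (t * s) + scaledMLE (n + 2) (t * s)))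
      (t ^ (n + 1) / (n.factorial : ℂ) * ((s : ℂ) ^ n * Complex.exp (-t * s))) s := by
    refine ((hasDerivAt_exp_neg_mul_scaledMLE_add n (t * s)).comp s
      ((Complex.ofRealCLM.hasDerivAt (x := s)).const_mul t)).congr_deriv ?_
    simp only [Complex.ofRealCLM_apply, Complex.ofReal_one, neg_mul]
    ring
  have hFTC := intervalIntegral.integral_eq_sub_of_hasDerivAt (a := 0) (b := 1)
    (fun s _ => hderiv s) (Continuous.intervalIntegrable (by fun_prop) _ _)
  rw [intervalIntegral.integral_const_mul] at hFTC
  rw [P2L, Complex.ofReal_natCast, Nat.cast_succ, Complex.Gamma_nat_eq_factorial,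
    Nat.add_sub_cancel, hFTC]
  simp [scaledMLE_succ_apply_zero]

lemma PLhalf_eq_integral_pow {L : ℝ} {M : ℕ} (hM : 2 * L = M) (w : ℂ) :
    PLhalf M L w = w ^ (M + 1) / Complex.Gamma ((L + 1 / 2 : ℝ) : ℂ) *
      ∫ s in (0:ℝ)..1, 2 * (s : ℂ) ^ M * Complex.exp (-(s : ℂ) ^ 2 * w ^ 2) := by
  have h := integral_rpow_sub_half_smul hM (fun s : ℝ => Complex.exp (-w ^ 2 * s)) zero_le_one
  simp only [one_pow, Complex.real_smul] at h
  rw [PLhalf, h]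
  congr 1
  refine intervalIntegral.integral_congr fun s _ => ?_
  push_cast
  rw [show -w ^ 2 * (s : ℂ) ^ 2 = -(s : ℂ) ^ 2 * w ^ 2 by ring]

lemma two_pow_div_factorial_eq_sqrt_pi_div_Gamma {L : ℝ} {n : ℕ}
    (hn : 2 * L = ((n + 1 : ℕ) : ℝ)) :
    (2 : ℂ) ^ n / (n.factorial : ℂ) = (Real.sqrt Real.pi : ℂ) /
      (Complex.Gamma (L : ℂ) * Complex.Gamma ((L + 1 / 2 : ℝ) : ℂ)) := by
  have h2L : (2 * L : ℂ) = n + 1 := by exact_mod_cast congrArg ((↑) : ℝ → ℂ) hn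
  have hdup := Complex.Gamma_mul_Gamma_add_half (L : ℂ)
  rw [h2L, Complex.Gamma_nat_eq_factorial, sub_add_cancel_right, Complex.cpow_neg,
    Complex.cpow_natCast] at hdup
  have hsqrt : (Real.sqrt Real.pi : ℂ) ≠ 0 :=
    Complex.ofReal_ne_zero.2 (Real.sqrt_pos.2 Real.pi_pos).ne'
  push_cast
  rw [hdup]
  field_simp

end IncompleteGamma

section Kernel

/-- The integrand of the weighted kernel `e^{-z²-w²} κ_o(z,w)`, with the Gaussian weight and the
power `(2zw)^M` moved under the integral sign. -/
def kernelIntegrand (M : ℕ) (w z : ℂ) (s : ℝ) : ℂ :=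
  2 * (z * Complex.exp (-(s : ℂ) ^ 2 * z ^ 2 - w ^ 2) -
    w * Complex.exp (-(s : ℂ) ^ 2 * w ^ 2 - z ^ 2)) * scaledMLE M (2 * s * z * w)

/-- The `z`-derivative of `kernelIntegrand (n + 1) w z s`. -/
def kernelIntegrandDeriv (n : ℕ) (w z : ℂ) (s : ℝ) : ℂ :=
  2 * ((1 - 2 * (s : ℂ) ^ 2 * z ^ 2) * Complex.exp (-(s : ℂ) ^ 2 * z ^ 2 - w ^ 2) +
    2 * z * w * Complex.exp (-(s : ℂ) ^ 2 * w ^ 2 - z ^ 2)) * scaledMLE (n + 1) (2 * s * z * w) +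
  2 * (z * Complex.exp (-(s : ℂ) ^ 2 * z ^ 2 - w ^ 2) -
    w * Complex.exp (-(s : ℂ) ^ 2 * w ^ 2 - z ^ 2)) *
      (2 * s * w * scaledMLE n (2 * s * z * w))

/-- For `M = n + 1`, a primitive in `s` of `kernelIntegrandDeriv n w z` up to the error term
`kernelSource n w z`. -/
def kernelPrimitive (M : ℕ) (w z : ℂ) (s : ℝ) : ℂ :=
  2 * s * Complex.exp (-(s : ℂ) ^ 2 * z ^ 2 - w ^ 2) * scaledMLE M (2 * s * z * w) +
    2 * Complex.exp (-(s : ℂ) ^ 2 * w ^ 2 - z ^ 2) * scaledMLE (M + 1) (2 * s * z * w)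

/-- The contribution of the defect `t^n/n!` in `scaledMLE_add_two` to the `s`-derivative of
`kernelPrimitive (n + 1) w z`. -/
def kernelSource (n : ℕ) (w z : ℂ) (s : ℝ) : ℂ :=
  2 * Complex.exp (-z ^ 2) * (2 * z) ^ n / (n.factorial : ℂ) * w ^ (n + 2) *
    (2 * (s : ℂ) ^ (n + 1) * Complex.exp (-(s : ℂ) ^ 2 * w ^ 2))

lemma exp_mul_ko (M : ℕ) (z w : ℂ) :
    Complex.exp (-z ^ 2 - w ^ 2) * ko M z w = ∫ s in (0:ℝ)..1, kernelIntegrand M w z s := by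
  rw [ko, ← mul_assoc, ← intervalIntegral.integral_const_mul]
  refine intervalIntegral.integral_congr fun s _ => ?_
  simp only [kernelIntegrand, scaledMLE]
  rw [show -(s : ℂ) ^ 2 * z ^ 2 - w ^ 2 = -z ^ 2 - w ^ 2 + (1 - (s : ℂ) ^ 2) * z ^ 2 by ring,
    show -(s : ℂ) ^ 2 * w ^ 2 - z ^ 2 = -z ^ 2 - w ^ 2 + (1 - (s : ℂ) ^ 2) * w ^ 2 by ring,
    Complex.exp_add, Complex.exp_add]
  ring

lemma hasDerivAt_kernelIntegrand (n : ℕ) (w z : ℂ) (s : ℝ) :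
    HasDerivAt (fun z => kernelIntegrand (n + 1) w z s) (kernelIntegrandDeriv n w z s) z := by
  have hid := hasDerivAt_id z
  have hsq := hasDerivAt_pow 2 z
  have hexp₁ := ((hsq.const_mul (-(s : ℂ) ^ 2)).sub_const (w ^ 2)).cexp
  have hexp₂ := (hsq.const_sub (-(s : ℂ) ^ 2 * w ^ 2)).cexp
  have hMLE := (hasDerivAt_scaledMLE_succ (2 * s * z * w) n).comp z
    ((hid.const_mul (2 * (s : ℂ))).mul_const w)
  refine ((((hid.mul hexp₁).sub (hexp₂.const_mul w)).const_mul 2).mul hMLE).congr_deriv ?_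
  simp only [kernelIntegrandDeriv, id, Function.comp, Pi.mul_apply, Pi.sub_apply]
  push_cast
  ring

lemma continuous_kernelIntegrand (M : ℕ) (w z : ℂ) : Continuous (kernelIntegrand M w z) := by
  unfold kernelIntegrand
  fun_prop

lemma continuous_uncurry_kernelIntegrandDeriv (n : ℕ) (w : ℂ) :
    Continuous (Function.uncurry (kernelIntegrandDeriv n w)) := by
  unfold kernelIntegrandDeriv Function.uncurry
  fun_prop

lemma continuous_kernelSource (n : ℕ) (w z : ℂ) : Continuous (kernelSource n w z) := by
  unfold kernelSource
  fun_prop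

lemma hasDerivAt_kernelPrimitive (n : ℕ) (w z : ℂ) (s : ℝ) :
    HasDerivAt (kernelPrimitive (n + 1) w z)
      (kernelIntegrandDeriv n w z s + kernelSource n w z s) s := by
  have hs : HasDerivAt (fun s : ℝ => (s : ℂ)) 1 s := Complex.ofRealCLM.hasDerivAt
  have hexp₁ := (((hs.pow 2).neg.mul_const (z ^ 2)).sub_const (w ^ 2)).cexp
  have hexp₂ := (((hs.pow 2).neg.mul_const (w ^ 2)).sub_const (z ^ 2)).cexp
  have hMLE (M : ℕ) := (hasDerivAt_scaledMLE_succ (2 * s * z * w) M).comp s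
    (((hs.const_mul 2).mul_const z).mul_const w)
  have hsplit : Complex.exp (-(s : ℂ) ^ 2 * w ^ 2 - z ^ 2) =
      Complex.exp (-(s : ℂ) ^ 2 * w ^ 2) * Complex.exp (-z ^ 2) := by
    rw [← Complex.exp_add, ← sub_eq_add_neg]
  refine ((((hs.const_mul 2).mul hexp₁).mul (hMLE n)).add
    ((hexp₂.const_mul 2).mul (hMLE (n + 1)))).congr_deriv ?_
  simp only [kernelIntegrandDeriv, kernelSource, scaledMLE_add_two, Function.comp, Pi.mul_apply,
    Pi.neg_apply, Pi.pow_apply, hsplit]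
  push_cast
  ring

lemma kernelPrimitive_succ_zero (n : ℕ) (w z : ℂ) : kernelPrimitive (n + 1) w z 0 = 0 := by
  simp [kernelPrimitive, scaledMLE_succ_apply_zero]

lemma kernelPrimitive_succ_one (n : ℕ) (w z : ℂ) :
    kernelPrimitive (n + 1) w z 1 =
      2 * Complex.exp (-(z - w) ^ 2) * P2L (n + 1) (2 * z * w) := by
  have hexp : Complex.exp (-z ^ 2 - w ^ 2) =
      Complex.exp (-(z - w) ^ 2) * Complex.exp (-(2 * z * w)) := by
    rw [← Complex.exp_add]; congr 1; ring
  rw [P2L_succ, kernelPrimitive, Complex.ofReal_one,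
    show -(1 : ℂ) ^ 2 * z ^ 2 - w ^ 2 = -z ^ 2 - w ^ 2 by ring,
    show -(1 : ℂ) ^ 2 * w ^ 2 - z ^ 2 = -z ^ 2 - w ^ 2 by ring, mul_one, hexp]
  ring

lemma integral_kernelSource {L : ℝ} {n : ℕ} (hn : 2 * L = ((n + 1 : ℕ) : ℝ)) (w z : ℂ) :
    ∫ s in (0:ℝ)..1, kernelSource n w z s =
      2 * (Real.sqrt Real.pi : ℂ) / Complex.Gamma (L : ℂ) * z ^ n * Complex.exp (-z ^ 2) *
        PLhalf (n + 1) L w := by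
  simp only [kernelSource]
  rw [intervalIntegral.integral_const_mul, PLhalf_eq_integral_pow hn]
  set I := ∫ s in (0:ℝ)..1, 2 * (s : ℂ) ^ (n + 1) * Complex.exp (-(s : ℂ) ^ 2 * w ^ 2)
  rw [mul_pow]
  linear_combination (2 * Complex.exp (-z ^ 2) * z ^ n * w ^ (n + 2) * I) *
    two_pow_div_factorial_eq_sqrt_pi_div_Gamma hn

lemma integral_kernelIntegrandDeriv {L : ℝ} {n : ℕ} (hn : 2 * L = ((n + 1 : ℕ) : ℝ)) (w z : ℂ) :
    ∫ s in (0:ℝ)..1, kernelIntegrandDeriv n w z s = Fo (n + 1) L z w := by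
  have hDeriv : IntervalIntegrable (kernelIntegrandDeriv n w z) volume 0 1 :=
    ((continuous_uncurry_kernelIntegrandDeriv n w).comp
      (Continuous.prodMk_right z)).intervalIntegrable 0 1
  have hSource := (continuous_kernelSource n w z).intervalIntegrable (μ := volume) 0 1
  have hFTC := intervalIntegral.integral_eq_sub_of_hasDerivAt
    (fun s _ => hasDerivAt_kernelPrimitive n w z s) (hDeriv.add hSource)
  rw [intervalIntegral.integral_add hDeriv hSource, kernelPrimitive_succ_zero, sub_zero,
    kernelPrimitive_succ_one, integral_kernelSource hn] at hFTC
  exact eq_sub_of_add_eq hFTC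

end Kernel

/-- Lemma 2.3(c): the Mittag-Leffler kernel solves the limiting
differential equation at the singular origin (`2L = M` a positive integer). -/
theorem limiting_ODE_origin (L : ℝ) (M : ℕ) (hL : 0 < L) (hM : 2*L = (M : ℝ))
    (hM1 : 1 ≤ M) (w : ℂ) :
    Complex.exp (-w^2-w^2) * ko M w w = 0 ∧
    ∀ z : ℂ, HasDerivAt (fun z => Complex.exp (-z^2-w^2) * ko M z w) (Fo M L z w) z := by
  obtain ⟨n, rfl⟩ := Nat.exists_eq_add_of_le' hM1
  refine ⟨by simp [ko], fun z => ?_⟩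
  simp only [exp_mul_ko]
  rw [← integral_kernelIntegrandDeriv hM]
  exact hasDerivAt_intervalIntegral_of_continuous (continuous_kernelIntegrand (n + 1) w)
    (continuous_uncurry_kernelIntegrandDeriv n w) (hasDerivAt_kernelIntegrand n w) 0 1 z

end SI
end
end
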